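/- Let J be an antichain on V consisting of sets of size at least 2 with ⋃J = V, and let I = {v : ∃u∈J, v ⊆ u} be the simplicial complex generated by J. Let S be a regular I-system of difference fields on V over A. Then [S(V) : S₀(V)] = ∏_{u∈J} [S(u) : S(u)^-], where S₀(V) = ∏_{v∈I\J} S(v) and S(u)^- = ∏_{v∈P(u)^-} S(v). (The degree computation in the proof of the Stochastic Independence Theorem.) -/

import Mathlib

/-- Subfields `E` and `F` of `K` containing `C` are linearly disjoint over `C`
if the multiplication map `E ⊗[C] F → K` is injective. -/
def LinearDisjointOver {K : Type*} [Field K] (C E F : Subfield K) : Prop :=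
  (Submodule.span C (E : Set K)).LinearDisjoint (Submodule.span C (F : Set K))

/-- The relative algebraic closure `E^{alg}` of a subfield `E` inside `K`. -/
def algCl {K : Type*} [Field K] (E : Subfield K) : Subfield K :=
  Subfield.closure {x : K | IsAlgebraic E x}

/-- The inversive closure `E^{inv}`: the smallest subfield of `K` containing `E`
closed under `σ` and `σ⁻¹`. -/
def invCl {K : Type*} [Field K] (σ : K ≃+* K) (E : Subfield K) : Subfield K :=
  sInf {F : Subfield K | E ≤ F ∧ (∀ x ∈ F, σ x ∈ F) ∧ ∀ x ∈ F, σ.symm x ∈ F}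

/-- `E` and `F` are independent over `C`: `((E·C)^{inv})^{alg}` and
`((F·C)^{inv})^{alg}` are linearly disjoint over `(C^{inv})^{alg}`. -/
def IndependentOver {K : Type*} [Field K] (σ : K ≃+* K) (C E F : Subfield K) : Prop :=
  LinearDisjointOver (algCl (invCl σ C)) (algCl (invCl σ (E ⊔ C))) (algCl (invCl σ (F ⊔ C)))

/-- `F ≤ E` and `E/F` is a finite Galois extension (of subfields of `K`). -/
def IsFiniteGaloisExt {K : Type*} [Field K] (F E : Subfield K) : Prop :=
  ∃ h : F ≤ E,
    letI : Algebra F E := (Subfield.inclusion h).toAlgebra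
    FiniteDimensional F E ∧ IsGalois F E

/-- `I_u = {v ∩ u : v ∈ I}`. -/
def interFamily {V : Type*} [DecidableEq V] (I : Set (Finset V)) (u : Finset V) :
    Set (Finset V) :=
  {w | ∃ v ∈ I, w = v ∩ u}

/-- A system of difference fields on `V` over `A` inside `(K, σ)`. -/
structure DiffFieldSystem {K : Type*} [Field K] (σ : K ≃+* K)
    (V : Type*) [Fintype V] [DecidableEq V] (A : Subfield K) where
  /-- the underlying map from subsets of `V` to subfields of `K` -/
  S : Finset V → Subfield K
  mono : ∀ {u v : Finset V}, u ⊆ v → S u ≤ S v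
  empty_eq : S ∅ = A
  sigma_stable : ∀ u : Finset V, ∀ x ∈ S u, σ x ∈ S u
  perfect : ∀ u : Finset V, PerfectField (S u)
  /-- each `S u` has finite transcendence degree over `A` -/
  fin_trdeg : ∀ u : Finset V, ∃ t : Finset K,
    ∀ x ∈ S u, IsAlgebraic ↥(A ⊔ Subfield.closure (t : Set K)) x
  /-- each `S u` is the perfect closure of a difference subfield generated over
  `A` by a finite set (i.e. the smallest perfect `σ`-stable subfield of `K`
  containing `A` and that finite set) -/
  fin_gen : ∀ u : Finset V, ∃ t : Finset K,
    (A ≤ S u ∧ (t : Set K) ⊆ S u) ∧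
    ∀ F : Subfield K, A ≤ F → (t : Set K) ⊆ F → (∀ x ∈ F, σ x ∈ F) →
      PerfectField F → S u ≤ F
  /-- the family `(S {i})_{i ∈ V}` is independent over `A` -/
  indep : ∀ I₁ I₂ : Finset V, Disjoint I₁ I₂ →
    IndependentOver σ A (A ⊔ ⨆ i ∈ I₁, S {i}) (A ⊔ ⨆ i ∈ I₂, S {i})
  /-- for `|u| ≥ 2`, `S u` is a finite Galois extension of
  `S(u)⁻ = ∏_{v ∈ P(u)⁻} S v` -/
  galois : ∀ u : Finset V, 2 ≤ u.card →
    IsFiniteGaloisExt (⨆ v ∈ u.powerset.erase u, S v) (S u)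

namespace DiffFieldSystem

variable {K : Type*} [Field K] {σ : K ≃+* K}
variable {V : Type*} [Fintype V] [DecidableEq V] {A : Subfield K}

/-- `S(u)⁻ = ∏_{v ∈ P(u)⁻} S(v)`. -/
def Sminus (𝒮 : DiffFieldSystem σ V A) (u : Finset V) : Subfield K :=
  ⨆ v ∈ u.powerset.erase u, 𝒮.S v

/-- `𝒮` is an `I`-system: `S u = S(u)⁻` for `u ∉ I`. -/
def IsOn (𝒮 : DiffFieldSystem σ V A) (I : Set (Finset V)) : Prop :=
  ∀ u : Finset V, u ∉ I → 𝒮.S u = 𝒮.Sminus u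

/-- `𝒮` is regular: for every nonempty `u`, `S u` is linearly disjoint from
`∏_{v ∈ P(u)⁻} S(v)^{alg}` over `∏_{v ∈ P(u)⁻} S(v)`. -/
def Regular (𝒮 : DiffFieldSystem σ V A) : Prop :=
  ∀ u : Finset V, u ≠ ∅ →
    LinearDisjointOver (𝒮.Sminus u) (𝒮.S u) (⨆ v ∈ u.powerset.erase u, algCl (𝒮.S v))

end DiffFieldSystem

/-- `I` is a simplicial complex on `V`: downward closed with union all of `V`. -/
def IsSimplicialComplexOn (V : Type*) [DecidableEq V] (I : Set (Finset V)) : Prop :=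
  (∀ u ∈ I, ∀ v : Finset V, v ⊆ u → v ∈ I) ∧ ∀ i : V, ∃ u ∈ I, i ∈ u

open scoped Classical in
/-- The degree `[E : F]` of an extension of subfields of a common field,
via the inclusion-induced algebra structure (0 if `F ≰ E`). -/
noncomputable def subfieldDeg {K : Type*} [Field K] (F E : Subfield K) : ℕ :=
  if h : F ≤ E then
    letI : Algebra F E := (Subfield.inclusion h).toAlgebra
    Module.finrank F E
  else 0

/-!
Adjoin the fields `S u`, `u ∈ J`, to `S₀(V)` one at a time. Each step is obtained by adjoining a
finite Galois extension of `S(u)⁻`, so by Galois theory it has degree `[S(u) : S(u)⁻]` as soon as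
`S u` meets the composite of all `S v` with `u ⊈ v` only in `S(u)⁻`.

To prove this, let `k = A^{alg}`, `L = S(u)^{alg}` and `M = S(V \ u)^{alg}`. Independence makes
`L` and `M` linearly disjoint over `k` and gives `S v ⊆ (S(v ∩ u)^{alg} M)^{alg}`. It therefore
suffices, by regularity, that `L ∩ ∏ᵢ (Pᵢ M)^{alg} ⊆ ∏ᵢ Pᵢ` for algebraically closed fields `Pᵢ`
with `k ⊆ Pᵢ ⊆ L`. By the Nullstellensatz `M` embeds over `k` into an ultrapower `k*`. Linear
disjointness makes this embedding compatible with the diagonal embedding of `L` into `K*`, so that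
both are induced by an embedding of `K` in a common extension of `K` and `K*`. It sends `Pᵢ` and
`M` into `Pᵢ*`, hence also `(Pᵢ M)^{alg}`, as `Pᵢ*` is algebraically closed. The composite thus
lands in `(∏ᵢ Pᵢ)*`, whose diagonal elements are exactly those of `∏ᵢ Pᵢ`.
-/

open scoped TensorProduct

theorem exists_algHom_of_finiteType {k M : Type*} [Field k] [IsAlgClosed k] [CommRing M]
    [Nontrivial M] [Algebra k M] [Algebra.FiniteType k M] : Nonempty (M →ₐ[k] k) := by
  obtain ⟨m, hm⟩ := Ideal.exists_maximal M
  let := Ideal.Quotient.field m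
  have := finite_of_finite_type_of_isJacobsonRing k (M ⧸ m)
  exact ⟨(IsAlgClosed.lift : (M ⧸ m) →ₐ[k] k).comp (Ideal.Quotient.mkₐ k m)⟩

theorem map_mem_fieldRange_of_isAlgebraic {F K Ω : Type*} [Field F] [IsAlgClosed F] [Field K]
    [Field Ω] {f : F →+* Ω} {Φ : K →+* Ω} {N : Subfield K} (hN : N.map Φ ≤ f.fieldRange) {x : K}
    (hx : IsAlgebraic N x) : Φ x ∈ f.fieldRange := by
  let := f.toAlgebra
  let Ψ : N →+* f.fieldRange := (Φ.comp N.subtype).codRestrict _ fun y => hN ⟨y, y.2, rfl⟩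
  let g : N →+* F := f.rangeRestrictFieldEquiv.symm.toRingHom.comp Ψ
  have hg : (algebraMap F Ω).comp g = Φ.comp (algebraMap N K) := by
    ext y
    exact congrArg Subtype.val (f.rangeRestrictFieldEquiv.apply_symm_apply (Ψ y))
  have hint : IsIntegral F (Φ x) := (hx.ringHom_of_comp_eq g Φ g.injective hg).isIntegral
  exact minpoly.mem_range_of_degree_eq_one F _
    (IsAlgClosed.degree_eq_one_of_irreducible F (minpoly.irreducible hint))

theorem exists_field_amalgam.{u, v, w} {R : Type u} {A : Type v} {B : Type w} [CommRing R]
    [CommRing A] [IsDomain A] [CommRing B] [IsDomain B] {f : R →+* A} {g : R →+* B}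
    (hf : Function.Injective f) (hg : Function.Injective g) :
    ∃ (Ω : Type (max v w)) (_ : Field Ω) (Φ : A →+* Ω) (Ψ : B →+* Ω), Φ.comp f = Ψ.comp g := by
  let := f.toAlgebra
  let := g.toAlgebra
  have := Algebra.TensorProduct.nontrivial_of_algebraMap_injective_of_isDomain R A B hf hg
  obtain ⟨m, hm⟩ := Ideal.exists_maximal (A ⊗[R] B)
  let := Ideal.Quotient.field m
  let i : A →ₐ[R] A ⊗[R] B := Algebra.TensorProduct.includeLeft
  let j : B →ₐ[R] A ⊗[R] B := Algebra.TensorProduct.includeRight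
  let q := Ideal.Quotient.mkₐ R m
  exact ⟨A ⊗[R] B ⧸ m, inferInstance, q.comp i, q.comp j,
    (q.comp i).comp_algebraMap.trans (q.comp j).comp_algebraMap.symm⟩

section Germ

open Filter

variable {X R A B : Type*} {l : Filter X}

instance [CommSemiring R] [Semiring A] [Algebra R A] : Algebra R (Germ l A) where
  algebraMap := (Germ.coeRingHom l).comp (algebraMap R (X → A))
  commutes' r x := x.inductionOn fun f => congrArg Germ.ofFun (Algebra.commutes r f)
  smul_def' r x := x.inductionOn fun f => congrArg Germ.ofFun (Algebra.smul_def r f)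

instance [CommSemiring R] [CommSemiring A] [Algebra R A] : IsScalarTower R A (Germ l A) :=
  IsScalarTower.of_algebraMap_eq fun _ => rfl

/-- The homomorphism of reduced powers obtained by applying `f` coordinatewise. -/
def germMap [CommSemiring R] [Semiring A] [Semiring B] [Algebra R A] [Algebra R B]
    (f : A →ₐ[R] B) : Germ l A →ₐ[R] Germ l B where
  toFun := Germ.map f
  map_one' := congrArg Germ.ofFun (funext fun _ => map_one f)
  map_mul' x y := Germ.inductionOn₂ x y fun _ _ =>
    congrArg Germ.ofFun (funext fun _ => map_mul f _ _)
  map_zero' := congrArg Germ.ofFun (funext fun _ => map_zero f)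
  map_add' x y := Germ.inductionOn₂ x y fun _ _ =>
    congrArg Germ.ofFun (funext fun _ => map_add f _ _)
  commutes' r := congrArg Germ.ofFun (funext fun _ => f.commutes r)

theorem linearIndependent_germ_const [Ring R] [AddCommGroup A] [Module R A] {ι : Type*}
    {v : ι → A} (hv : LinearIndependent R v) :
    LinearIndependent (Germ l R) fun i => (v i : Germ l A) := by
  rw [linearIndependent_iff'] at hv ⊢
  intro s g hg i hi
  choose c hc using fun i => Quot.exists_rep (g i)
  obtain rfl : (fun i => (c i : Germ l R)) = g := funext hc
  have hsum : ((∑ i ∈ s, c i • (fun _ => v i) : X → A) : Germ l A) = 0 :=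
    (map_sum (Germ.coeAddHom (M := A) l) _ s).trans hg
  refine Germ.coe_eq.2 ?_
  filter_upwards [Germ.coe_eq.1 hsum] with x hx
  exact hv s (fun i => c i x) (by simpa using hx) i hi

open Algebra.TensorProduct in
theorem injective_productMap_germ {L M : Type*} [CommRing R] [CommRing A] [CommRing L] [CommRing M]
    [Algebra R A] [Algebra R L] [Algebra R M] [Module.Free R L] {f : L →ₐ[R] A}
    {ψ : M →ₐ[R] Germ l R} (hf : Function.Injective f) (hψ : Function.Injective ψ) :
    Function.Injective (productMap ((IsScalarTower.toAlgHom R A (Germ l A)).comp f)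
      ((germMap (Algebra.ofId R A)).comp ψ)) := by
  rw [injective_iff_map_eq_zero]
  intro t ht
  let b := Module.Free.chooseBasis R L
  obtain ⟨m, rfl⟩ := TensorProduct.eq_repr_basis_left b t
  have hli : LinearIndependent (Germ l R) fun i => (f (b i) : Germ l A) :=
    linearIndependent_germ_const
      (b.linearIndependent.map' f.toLinearMap (LinearMap.ker_eq_bot.2 hf))
  have hsmul (c : Germ l R) (a : A) :
      c • (a : Germ l A) = (a : Germ l A) * germMap (Algebra.ofId R A) c :=
    c.inductionOn fun c => congrArg Germ.ofFun <| funext fun x =>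
      (Algebra.smul_def (c x) a).trans (mul_comm _ _)
  have hsum : ∑ i ∈ m.support, ψ (m i) • (f (b i) : Germ l A) = 0 := by
    rw [← ht, Finsupp.sum, map_sum]
    refine Finset.sum_congr rfl fun i _ => ?_
    rw [hsmul, productMap_apply_tmul]
    rfl
  refine Finset.sum_eq_zero fun i hi => ?_
  have hmi : m i = 0 := (map_eq_zero_iff ψ hψ).1
    (linearIndependent_iff'.1 hli m.support (fun i => ψ (m i)) hsum i hi)
  exact hmi ▸ TensorProduct.tmul_zero _ _

end Germ

section Ultrapower

open Filter

variable {X K : Type*} [Field K] (φ : Ultrafilter X)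

open Polynomial in
instance isAlgClosed_germ [IsAlgClosed K] : IsAlgClosed (Germ (φ : Filter X) K) := by
  refine IsAlgClosed.of_exists_root _ fun p hp hirr => ?_
  have hsurj : Function.Surjective (Germ.coeRingHom (R := K) (φ : Filter X)) :=
    Quotient.mk''_surjective
  obtain ⟨q, rfl, hdeg, hq⟩ := lifts_and_natDegree_eq_and_monic
    (lifts_iff_coeff_lifts p |>.2 fun n => hsurj (p.coeff n)) hp
  have hroot (x : X) : ∃ y, (q.map (Pi.evalRingHom _ x)).IsRoot y := by
    refine IsAlgClosed.exists_root _ fun h => hirr.natDegree_pos.ne' ?_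
    rw [← hdeg, ← hq.natDegree_map (Pi.evalRingHom _ x), natDegree_eq_zero_iff_degree_le_zero, h]
  choose f hf using hroot
  have hqf : q.eval f = 0 := _root_.funext fun x => by
    rw [Pi.zero_apply, ← (hf x).eq_zero, eval_map]
    exact (eval₂_at_apply (Pi.evalRingHom _ x) f).symm
  exact ⟨f, by rw [eval_map, ← Germ.coe_coeRingHom, eval₂_at_apply, hqf, map_zero]⟩

/-- The ultrapower of a subfield `P` of `K`, as a subfield of the ultrapower of `K`. -/
def ultrapower (P : Subfield K) : Subfield (Germ (φ : Filter X) K) :=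
  (germMap (Algebra.ofId P K)).toRingHom.fieldRange

variable {φ}

theorem coe_mem_ultrapower {P : Subfield K} {f : X → K} :
    (f : Germ (φ : Filter X) K) ∈ ultrapower φ P ↔ ∀ᶠ x in (φ : Filter X), f x ∈ P := by
  classical
  refine ⟨?_, fun h => ⟨((fun x => if hx : f x ∈ P then ⟨f x, hx⟩ else 0 : X → P) :), ?_⟩⟩
  · rintro ⟨g, hg⟩
    induction g using Germ.inductionOn with | h g => ?_
    filter_upwards [Germ.coe_eq.1 hg] with x hx
    exact hx ▸ (g x).2
  · refine Germ.coe_eq.2 ?_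
    filter_upwards [h] with x hx
    simp only [Function.comp_apply, dif_pos hx]; rfl

theorem const_mem_ultrapower {P : Subfield K} {x : K} :
    (x : Germ (φ : Filter X) K) ∈ ultrapower φ P ↔ x ∈ P :=
  coe_mem_ultrapower.trans eventually_const

theorem ultrapower_mono : Monotone (ultrapower φ : Subfield K → _) := fun _ _ h x => by
  induction x using Germ.inductionOn with | h f => ?_
  simpa only [coe_mem_ultrapower] using fun hf => hf.mono fun _ hx => h hx

theorem exists_algHom_germ (k M : Type*) [Field k] [IsAlgClosed k] [CommRing M]
    [Nontrivial M] [Algebra k M] :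
    ∃ φ : Ultrafilter (Finset M), Nonempty (M →ₐ[k] Germ (φ : Filter (Finset M)) k) := by
  classical
  have point (s : Finset M) : Nonempty (Algebra.adjoin k (s : Set M) →ₐ[k] k) :=
    have := (Subalgebra.fg_iff_finiteType _).1 (Subalgebra.fg_adjoin_finset (R := k) s)
    exists_algHom_of_finiteType
  let g (s : Finset M) := (point s).some
  let e (x : M) (s : Finset M) : k :=
    if h : x ∈ Algebra.adjoin k (s : Set M) then g s ⟨x, h⟩ else 0
  have he (x : M) {s : Finset M} (h : x ∈ Algebra.adjoin k (s : Set M)) : e x s = g s ⟨x, h⟩ :=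
    dif_pos h
  let φ : Ultrafilter (Finset M) := Ultrafilter.of atTop
  have hmem (x : M) : ∀ᶠ s : Finset M in φ, x ∈ Algebra.adjoin k (s : Set M) := by
    refine Ultrafilter.of_le atTop ?_
    filter_upwards [eventually_ge_atTop {x}] with s hs
    exact Algebra.subset_adjoin (hs (Finset.mem_singleton_self x))
  have hadd (x y : M) : (e (x + y) : Germ (φ : Filter (Finset M)) k) = e x + e y := by
    refine Germ.coe_eq.2 ?_
    filter_upwards [hmem x, hmem y] with s hx hy
    simp only [he _ hx, he _ hy, he _ (add_mem hx hy), ← map_add]; rfl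
  have hmul (x y : M) : (e (x * y) : Germ (φ : Filter (Finset M)) k) = e x * e y := by
    refine Germ.coe_eq.2 ?_
    filter_upwards [hmem x, hmem y] with s hx hy
    simp only [he _ hx, he _ hy, he _ (mul_mem hx hy), ← map_mul]; rfl
  have hconst (c : k) : (e (algebraMap k M c) : Germ (φ : Filter (Finset M)) k) =
      algebraMap k (Germ (φ : Filter (Finset M)) k) c :=
    congrArg Germ.ofFun <| funext fun s =>
      (he _ (Subalgebra.algebraMap_mem _ c)).trans ((g s).commutes c)
  exact ⟨φ, ⟨{
    toFun := fun x => e x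
    map_one' := by simpa only [map_one] using hconst 1
    map_mul' := hmul
    map_zero' := by simpa only [map_zero] using hconst 0
    map_add' := hadd
    commutes' := fun c => hconst c }⟩⟩

end Ultrapower

open Filter in
theorem exists_specialization.{u, v} {k : Type u} {K : Type v} [Field k] [IsAlgClosed k]
    [Field K] [Algebra k K] {L M : IntermediateField k K} (h : L.LinearDisjoint M) :
    ∃ (φ : Ultrafilter (Finset M)) (Ω : Type v) (_ : Field Ω) (Φ : K →+* Ω)
      (j : Germ (φ : Filter (Finset M)) K →+* Ω),
      (∀ x ∈ L, Φ x = j x) ∧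
      ∀ x ∈ M, Φ x ∈ (j.comp (germMap (Algebra.ofId k K)).toRingHom).fieldRange := by
  obtain ⟨φ, ⟨ψ⟩⟩ := exists_algHom_germ k M
  let τ := Algebra.TensorProduct.productMap L.val M.val
  let θ := Algebra.TensorProduct.productMap
    ((IsScalarTower.toAlgHom k K (Germ (φ : Filter (Finset M)) K)).comp L.val)
    ((germMap (Algebra.ofId k K)).comp ψ)
  have hτ : Function.Injective τ :=
    Subalgebra.linearDisjoint_iff_injective.1 (IntermediateField.linearDisjoint_iff'.1 h)
  have hθ : Function.Injective θ := injective_productMap_germ L.val.injective ψ.injective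
  obtain ⟨Ω, _, Φ, j, hΦj⟩ := exists_field_amalgam (f := τ.toRingHom) (g := θ.toRingHom) hτ hθ
  refine ⟨φ, Ω, inferInstance, Φ, j, fun x hx => ?_, fun x hx => ⟨ψ ⟨x, hx⟩, ?_⟩⟩
  · change Φ x = j (algebraMap K _ x)
    simpa [τ, θ] using RingHom.congr_fun hΦj ((⟨x, hx⟩ : L) ⊗ₜ[k] (1 : M))
  · simpa [τ, θ] using (RingHom.congr_fun hΦj ((1 : L) ⊗ₜ[k] (⟨x, hx⟩ : M))).symm

section LinearDisjointOver

variable {K : Type*} [Field K] {C E F : Subfield K}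

theorem linearDisjointOver_iff (hE : C ≤ E) (hF : C ≤ F) : LinearDisjointOver C E F ↔
    (Subfield.extendScalars hE).LinearDisjoint (Subfield.extendScalars hF) := by
  have span_eq {G : Subfield K} (hG : C ≤ G) : Submodule.span C (G : Set K) =
      Subalgebra.toSubmodule (Subfield.extendScalars hG).toSubalgebra :=
    Submodule.span_eq (Subalgebra.toSubmodule (Subfield.extendScalars hG).toSubalgebra)
  rw [LinearDisjointOver, span_eq hE, span_eq hF, IntermediateField.linearDisjoint_iff']

theorem LinearDisjointOver.mono {E' F' : Subfield K} (h : LinearDisjointOver C E F)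
    (hE : E' ≤ E) (hF : F' ≤ F) : LinearDisjointOver C E' F' :=
  Submodule.LinearDisjoint.of_le_of_flat_left h (Submodule.span_mono hE) (Submodule.span_mono hF)

theorem LinearDisjointOver.inf_le (h : LinearDisjointOver C E F) (hE : C ≤ E) (hF : C ≤ F) :
    E ⊓ F ≤ C := by
  intro x hx
  have hbot := ((linearDisjointOver_iff hE hF).1 h).inf_eq_bot
  obtain ⟨y, rfl⟩ := IntermediateField.mem_bot.1 (hbot.le hx)
  exact y.2

end LinearDisjointOver

section AlgCl

variable {K : Type*} [Field K] {E F : Subfield K} {x : K}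

theorem algCl_eq_algebraicClosure (E : Subfield K) :
    algCl E = (algebraicClosure E K).toSubfield :=
  (congrArg Subfield.closure (Set.ext fun _ => mem_algebraicClosure_iff.symm)).trans
    (Subfield.closure_eq (algebraicClosure E K).toSubfield)

theorem mem_algCl : x ∈ algCl E ↔ IsAlgebraic E x := by
  rw [algCl_eq_algebraicClosure]
  exact mem_algebraicClosure_iff

theorem le_algCl (E : Subfield K) : E ≤ algCl E :=
  fun x hx => mem_algCl.2 (isAlgebraic_algebraMap (⟨x, hx⟩ : E))

theorem algCl_mono : Monotone (algCl : Subfield K → Subfield K) := by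
  intro E F h x hx
  let := (Subfield.inclusion h).toAlgebra
  have : IsScalarTower E F K := IsScalarTower.of_algebraMap_eq fun _ => rfl
  exact mem_algCl.2 ((mem_algCl.1 hx).tower_top F)

theorem algCl_idem (E : Subfield K) : algCl (algCl E) = algCl E := by
  rw [algCl_eq_algebraicClosure E]
  refine le_antisymm (fun x hx => ?_) (le_algCl _)
  have hbot := algebraicClosure.algebraicClosure_eq_bot E K
  obtain ⟨y, rfl⟩ := IntermediateField.mem_bot.1
    (hbot.le (mem_algebraicClosure_iff.2 (mem_algCl.1 hx)))
  exact y.2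

theorem algCl_le_algCl_iff : algCl E ≤ algCl F ↔ E ≤ algCl F :=
  ⟨(le_algCl E).trans, fun h => (algCl_mono h).trans (algCl_idem F).le⟩

theorem isAlgClosed_algCl [IsAlgClosed K] (E : Subfield K) : IsAlgClosed (algCl E) := by
  rw [algCl_eq_algebraicClosure]
  exact (algebraicClosure.isAlgClosure E K).isAlgClosed

theorem IsFiniteGaloisExt.le_algCl (h : IsFiniteGaloisExt F E) : E ≤ algCl F := by
  obtain ⟨hFE, hfin, -⟩ := h
  let := (Subfield.inclusion hFE).toAlgebra
  have : IsScalarTower F E K := IsScalarTower.of_algebraMap_eq fun _ => rfl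
  exact fun x hx => mem_algCl.2 (Algebra.IsAlgebraic.isAlgebraic (⟨x, hx⟩ : E)).algebraMap

end AlgCl

theorem inf_iSup_algCl_sup_le {K : Type*} [Field K] {k L M : Subfield K} [IsAlgClosed k]
    (hkL : k ≤ L) (hkM : k ≤ M) (hLM : LinearDisjointOver k L M) {ι : Type*}
    {P : ι → Subfield K} [∀ i, IsAlgClosed (P i)] (hkP : ∀ i, k ≤ P i) (hPL : ∀ i, P i ≤ L) :
    L ⊓ ⨆ i, algCl (P i ⊔ M) ≤ ⨆ i, P i := by
  obtain ⟨φ, Ω, _, Φ, j, hΦL, hΦM⟩ :=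
    exists_specialization ((linearDisjointOver_iff hkL hkM).1 hLM)
  have hj (Q : Subfield K) : (j.comp (germMap (Algebra.ofId Q K)).toRingHom).fieldRange =
      (ultrapower φ Q).map j :=
    (RingHom.map_fieldRange j _).symm
  have hmono {Q R : Subfield K} (h : Q ≤ R) : (ultrapower φ Q).map j ≤ (ultrapower φ R).map j :=
    (Subfield.gc_map_comap j).monotone_l (ultrapower_mono h)
  have hM {Q : Subfield K} (hkQ : k ≤ Q) : M.map Φ ≤ (ultrapower φ Q).map j := by
    rintro _ ⟨x, hx, rfl⟩
    exact hmono hkQ (hj k ▸ hΦM x hx)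
  have hP {Q : Subfield K} (hQL : Q ≤ L) : Q.map Φ ≤ (ultrapower φ Q).map j := by
    rintro _ ⟨x, hx, rfl⟩
    exact ⟨x, const_mem_ultrapower.2 hx, (hΦL x (hQL hx)).symm⟩
  have hsup : ⨆ i, algCl (P i ⊔ M) ≤ ((ultrapower φ (⨆ i, P i)).map j).comap Φ := by
    refine iSup_le fun i x hx => ?_
    refine hmono (le_iSup P i) ?_
    rw [← hj]
    refine map_mem_fieldRange_of_isAlgebraic ?_ (mem_algCl.1 hx)
    rw [hj, Subfield.map_sup]
    exact sup_le (hP (hPL i)) (hM (hkP i))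
  rintro x ⟨hxL, hx⟩
  obtain ⟨y, hy, hyx⟩ := hsup hx
  obtain rfl : y = x := j.injective (hyx.trans (hΦL x hxL))
  exact const_mem_ultrapower.1 hy

section Degree

section IntermediateField

open IntermediateField Module

variable {F E : Type*} [Field F] [Field E] [Algebra F E] {A B : IntermediateField F E}
  [IsGalois F A] [FiniteDimensional F A]

theorem finrank_eq_of_sup_eq_top_of_inf_eq_bot (hsup : A ⊔ B = ⊤) (hinf : A ⊓ B = ⊥) :
    finrank B E = finrank F A := by
  have := IsGalois.sup_right A B hsup
  have htop : adjoin B (A : Set E) = ⊤ := by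
    rw [← restrictScalars_eq_top_iff (K := F), restrictScalars_adjoin, adjoin_union, adjoin_self,
      adjoin_self, sup_comm, hsup]
  have hrank : Module.rank B E ≤ Module.rank F A := by
    have hle := adjoin_rank_le_of_isAlgebraic_right B A
    rwa [htop, rank_top'] at hle
  have : FiniteDimensional B E := rank_lt_aleph0_iff.1 (hrank.trans_lt (rank_lt_aleph0 F A))
  rw [← IsGalois.card_aut_eq_finrank, ← IsGalois.card_aut_eq_finrank]
  exact Nat.card_congr <| Equiv.ofBijective (restrictRestrictAlgEquivMapHom F A B E)
    ⟨restrictRestrictAlgEquivMapHom_injective A B hsup,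
      restrictRestrictAlgEquivMapHom_surjective A B hinf⟩

theorem relfinrank_sup_of_inf_eq_bot (h : A ⊓ B = ⊥) :
    B.relfinrank (A ⊔ B) = finrank F A := by
  have hA : A ≤ A ⊔ B := le_sup_left
  have hB : B ≤ A ⊔ B := le_sup_right
  have hsup : restrict hA ⊔ restrict hB = ⊤ := by
    rw [← lift_inj, lift_top, lift_sup, lift_restrict hA, lift_restrict hB]
  have hinf : restrict hA ⊓ restrict hB = ⊥ := by
    rw [← lift_inj, lift_bot, lift_inf, lift_restrict hA, lift_restrict hB, h]
  let e : A ≃ₐ[F] restrict hA := restrictAlgEquiv hA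
  have : IsGalois F (restrict hA) := IsGalois.of_algEquiv e
  have : FiniteDimensional F (restrict hA) := e.toLinearEquiv.finiteDimensional
  calc
    B.relfinrank (A ⊔ B) = (lift (restrict hB)).relfinrank (lift ⊤) := by
      rw [lift_restrict hB, lift_top]
    _ = finrank (restrict hB) ↥(A ⊔ B) :=
      (relfinrank_map_map _ _ (val _)).trans (relfinrank_top_right _)
    _ = finrank F (restrict hA) := finrank_eq_of_sup_eq_top_of_inf_eq_bot hsup hinf
    _ = finrank F A := e.toLinearEquiv.finrank_eq.symm

end IntermediateField

variable {K : Type*} [Field K]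

theorem subfieldDeg_eq_relfinrank {F E : Subfield K} (h : F ≤ E) :
    subfieldDeg F E = F.relfinrank E :=
  (dif_pos h).trans (Subfield.relfinrank_eq_finrank_of_le h).symm

theorem IsFiniteGaloisExt.relfinrank_sup {F A B : Subfield K} (h : IsFiniteGaloisExt F A)
    (hFB : F ≤ B) (hAB : A ⊓ B ≤ F) : B.relfinrank (A ⊔ B) = F.relfinrank A := by
  obtain ⟨hFA, hfin, hgal⟩ := h
  let A' := Subfield.extendScalars hFA
  let B' := Subfield.extendScalars hFB
  have : FiniteDimensional F A' := hfin
  have : IsGalois F A' := hgal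
  have hinf : A' ⊓ B' = ⊥ := bot_unique fun x hx => IntermediateField.mem_bot.2 ⟨⟨x, hAB hx⟩, rfl⟩
  calc
    B.relfinrank (A ⊔ B) = B'.relfinrank (A' ⊔ B') :=
      congrArg B.relfinrank (IntermediateField.sup_toSubfield A' B').symm
    _ = Module.finrank F A' := relfinrank_sup_of_inf_eq_bot hinf
    _ = F.relfinrank A := (Subfield.relfinrank_eq_finrank_of_le hFA).symm

theorem relfinrank_sup_biSup_eq_prod {ι : Type*} [DecidableEq ι] (s : Finset ι) {B : Subfield K}
    {F E : ι → Subfield K} (hgal : ∀ i ∈ s, IsFiniteGaloisExt (F i) (E i)) (hFB : ∀ i ∈ s, F i ≤ B)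
    (hinf : ∀ i ∈ s, E i ⊓ (B ⊔ ⨆ j ∈ s.erase i, E j) ≤ F i) :
    B.relfinrank (B ⊔ ⨆ i ∈ s, E i) = ∏ i ∈ s, (F i).relfinrank (E i) := by
  induction s using Finset.induction_on with
  | empty => simp
  | insert i s hi ih =>
    have hstep : (B ⊔ ⨆ j ∈ s, E j).relfinrank (E i ⊔ (B ⊔ ⨆ j ∈ s, E j)) =
        (F i).relfinrank (E i) := by
      have his := Finset.mem_insert_self i s
      refine (hgal i his).relfinrank_sup ((hFB i his).trans le_sup_left) ?_
      simpa only [Finset.erase_insert hi] using hinf i his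
    have hrest : B.relfinrank (B ⊔ ⨆ j ∈ s, E j) = ∏ j ∈ s, (F j).relfinrank (E j) := by
      refine ih (fun j hj => hgal j (Finset.mem_insert_of_mem hj))
        (fun j hj => hFB j (Finset.mem_insert_of_mem hj)) fun j hj => ?_
      refine le_trans ?_ (hinf j (Finset.mem_insert_of_mem hj))
      exact inf_le_inf_left _ (sup_le_sup_left
        (biSup_mono fun _ h => Finset.erase_subset_erase j (Finset.subset_insert i s) h) _)
    rw [Finset.iSup_insert, sup_left_comm, Finset.prod_insert hi, mul_comm, ← hstep, ← hrest]
    exact (Subfield.relfinrank_mul_relfinrank le_sup_left le_sup_right).symm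

end Degree

section InvCl

variable {K : Type*} [Field K] {σ : K ≃+* K} {E : Subfield K}

theorem le_invCl : E ≤ invCl σ E :=
  le_sInf fun _ hF => hF.1

theorem invCl_eq_self (hE : E.map (σ : K →+* K) = E) : invCl σ E = E := by
  refine le_antisymm (sInf_le ⟨le_rfl, fun x hx => ?_, fun x hx => ?_⟩) le_invCl
  · exact hE.le ⟨x, hx, rfl⟩
  · obtain ⟨y, hy, rfl⟩ := hE.ge hx
    simpa using hy

end InvCl

namespace DiffFieldSystem

variable {K : Type*} [Field K] {σ : K ≃+* K}
variable {V : Type*} [Fintype V] [DecidableEq V] {A : Subfield K} (𝒮 : DiffFieldSystem σ V A)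

theorem base_le (u : Finset V) : A ≤ 𝒮.S u :=
  𝒮.empty_eq.ge.trans (𝒮.mono (Finset.empty_subset u))

theorem Sminus_le_iff {u : Finset V} {E : Subfield K} :
    𝒮.Sminus u ≤ E ↔ ∀ v ⊂ u, 𝒮.S v ≤ E := by
  simp only [Sminus, iSup_le_iff, Finset.mem_erase, Finset.mem_powerset,
    Finset.ssubset_iff_subset_ne, and_comm]

theorem Sminus_le (u : Finset V) : 𝒮.Sminus u ≤ 𝒮.S u :=
  𝒮.Sminus_le_iff.2 fun _ hv => 𝒮.mono hv.subset

theorem le_algCl_iSup_singleton (u : Finset V) :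
    𝒮.S u ≤ algCl (A ⊔ ⨆ i ∈ u, 𝒮.S {i}) := by
  induction u using Finset.strongInduction with
  | H u ih =>
    by_cases hcard : 2 ≤ u.card
    · refine (𝒮.galois u hcard).le_algCl.trans (algCl_le_algCl_iff.2 ?_)
      exact 𝒮.Sminus_le_iff.2 fun v hv => (ih v hv).trans <| algCl_mono <|
        sup_le_sup_left (biSup_mono fun _ hi => hv.subset hi) A
    · refine le_trans ?_ (le_algCl _)
      rcases Nat.le_one_iff_eq_zero_or_eq_one.1 (Nat.not_lt.1 hcard) with hzero | hone
      · obtain rfl := Finset.card_eq_zero.1 hzero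
        exact 𝒮.empty_eq.le.trans le_sup_left
      · obtain ⟨i, rfl⟩ := Finset.card_eq_one.1 hone
        exact le_sup_of_le_right (le_biSup (fun i => 𝒮.S {i}) (Finset.mem_singleton_self i))

theorem linearDisjointOver_algCl_compl (hA : A.map (σ : K →+* K) = A) (u : Finset V) :
    LinearDisjointOver (algCl A) (algCl (𝒮.S u)) (algCl (𝒮.S uᶜ)) := by
  have hindep := 𝒮.indep u uᶜ disjoint_compl_right
  rw [IndependentOver, invCl_eq_self hA] at hindep
  have hle (v : Finset V) :
      algCl (𝒮.S v) ≤ algCl (invCl σ ((A ⊔ ⨆ i ∈ v, 𝒮.S {i}) ⊔ A)) :=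
    algCl_le_algCl_iff.2 <|
      (𝒮.le_algCl_iSup_singleton v).trans (algCl_mono (le_sup_left.trans le_invCl))
  exact hindep.mono (hle u) (hle uᶜ)

theorem le_algCl_inter_sup_compl (u v : Finset V) :
    𝒮.S v ≤ algCl (algCl (𝒮.S (v ∩ u)) ⊔ algCl (𝒮.S uᶜ)) := by
  refine (𝒮.le_algCl_iSup_singleton v).trans (algCl_mono (sup_le ?_ (iSup₂_le fun i hi => ?_)))
  · exact (𝒮.base_le _).trans ((le_algCl _).trans le_sup_left)
  · by_cases hu : i ∈ u
    · refine (𝒮.mono ?_).trans ((le_algCl _).trans le_sup_left)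
      exact Finset.singleton_subset_iff.2 (Finset.mem_inter.2 ⟨hi, hu⟩)
    · refine (𝒮.mono ?_).trans ((le_algCl _).trans le_sup_right)
      exact Finset.singleton_subset_iff.2 (Finset.mem_compl.2 hu)

theorem inf_iSup_not_subset_le [IsAlgClosed K] (hA : A.map (σ : K →+* K) = A)
    (hreg : 𝒮.Regular) {u : Finset V} (hu : u ≠ ∅) :
    𝒮.S u ⊓ ⨆ v, ⨆ (_ : ¬u ⊆ v), 𝒮.S v ≤ 𝒮.Sminus u := by
  let T := u.powerset.erase u
  have hT {v : Finset V} : v ∈ T ↔ v ⊂ u := by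
    rw [Finset.mem_erase, Finset.mem_powerset, Finset.ssubset_iff_subset_ne, and_comm]
  let P (w : T) : Subfield K := algCl (𝒮.S w)
  have hsup : ⨆ v, ⨆ (_ : ¬u ⊆ v), 𝒮.S v ≤ ⨆ w, algCl (P w ⊔ algCl (𝒮.S uᶜ)) :=
    iSup₂_le fun v hv => le_iSup_of_le
      ⟨v ∩ u, hT.2 (Finset.inter_subset_right.ssubset_of_ne fun h =>
        hv (Finset.inter_eq_right.1 h))⟩ (𝒮.le_algCl_inter_sup_compl u v)
  have : IsAlgClosed (algCl A) := isAlgClosed_algCl A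
  have (w : T) : IsAlgClosed (P w) := isAlgClosed_algCl _
  have hkey : algCl (𝒮.S u) ⊓ ⨆ w, algCl (P w ⊔ algCl (𝒮.S uᶜ)) ≤ ⨆ w, P w :=
    inf_iSup_algCl_sup_le (algCl_mono (𝒮.base_le u)) (algCl_mono (𝒮.base_le uᶜ))
      (𝒮.linearDisjointOver_algCl_compl hA u) (fun w => algCl_mono (𝒮.base_le w))
      fun w => algCl_mono (𝒮.mono (hT.1 w.2).subset)
  have hP : ⨆ w, P w = ⨆ v ∈ T, algCl (𝒮.S v) := iSup_subtype
  refine (le_inf inf_le_left ?_).trans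
    ((hreg u hu).inf_le (𝒮.Sminus_le u) (iSup₂_mono fun v _ => le_algCl (𝒮.S v)))
  exact hP ▸ (inf_le_inf (le_algCl _) hsup).trans hkey

variable {𝒮} in
theorem IsOn.iSup_eq {I : Set (Finset V)} (h : 𝒮.IsOn I) :
    ⨆ v ∈ I, 𝒮.S v = 𝒮.S Finset.univ := by
  have hle (u : Finset V) : 𝒮.S u ≤ ⨆ v ∈ I, 𝒮.S v := by
    induction u using Finset.strongInduction with
    | H u ih =>
      by_cases hu : u ∈ I
      · exact le_biSup 𝒮.S hu
      · exact (h u hu).trans_le (𝒮.Sminus_le_iff.2 ih)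
  exact le_antisymm (iSup₂_le fun v _ => 𝒮.mono (Finset.subset_univ v)) (hle Finset.univ)

end DiffFieldSystem

/-- (Degree computation in the Stochastic Independence Theorem.)
Let `J` be an antichain on `V` of sets of size `≥ 2` with `⋃J = V`, `I` the
simplicial complex generated by `J`, and `𝒮` a regular `I`-system. Then
`[S(V) : S₀(V)] = ∏_{u ∈ J} [S(u) : S(u)⁻]`, where `S₀(V) = ∏_{v ∈ I\J} S(v)`. -/
theorem stochastic_independence_degree_computation
    {K : Type*} [Field K] [IsAlgClosed K] (σ : K ≃+* K)
    {V : Type*} [Fintype V] [DecidableEq V]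
    (A : Subfield K) (hAperf : PerfectField A) (hAinv : A.map (σ : K →+* K) = A)
    (J : Finset (Finset V))
    (hJ2 : ∀ u ∈ J, 2 ≤ u.card)
    (hJanti : ∀ u ∈ J, ∀ v ∈ J, u ⊆ v → u = v)
    (hJcover : ∀ i : V, ∃ u ∈ J, i ∈ u)
    (𝒮 : DiffFieldSystem σ V A)
    (h𝒮 : 𝒮.IsOn {v : Finset V | ∃ u ∈ J, v ⊆ u})
    (hreg : 𝒮.Regular) :
    subfieldDeg (⨆ v ∈ ({v : Finset V | ∃ u ∈ J, v ⊆ u} \ ↑J), 𝒮.S v)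
        (𝒮.S Finset.univ) =
      ∏ u ∈ J, subfieldDeg (𝒮.Sminus u) (𝒮.S u) := by
  set I : Set (Finset V) := {v | ∃ u ∈ J, v ⊆ u}
  have hJI : (J : Set (Finset V)) ⊆ I := fun u hu => ⟨u, hu, subset_rfl⟩
  have hnot {u v : Finset V} (hu : u ∈ J) (hv : v ∈ I \ J) : ¬u ⊆ v := fun huv => by
    obtain ⟨w, hw, hvw⟩ := hv.1
    obtain rfl := hJanti u hu w hw (huv.trans hvw)
    exact hv.2 (huv.antisymm hvw ▸ hu)
  have hminus (u) (hu : u ∈ J) : 𝒮.Sminus u ≤ ⨆ v ∈ I \ J, 𝒮.S v :=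
    𝒮.Sminus_le_iff.2 fun v hv =>
      le_biSup 𝒮.S ⟨⟨u, hu, hv.subset⟩, fun hvJ => hv.ne (hJanti v hvJ u hu hv.subset)⟩
  have hinf (u) (hu : u ∈ J) :
      𝒮.S u ⊓ ((⨆ v ∈ I \ J, 𝒮.S v) ⊔ ⨆ v ∈ J.erase u, 𝒮.S v) ≤ 𝒮.Sminus u := by
    have hne : u ≠ ∅ := (Finset.card_pos.1 (two_pos.trans_le (hJ2 u hu))).ne_empty
    refine (inf_le_inf_left _ (sup_le ?_ ?_)).trans (𝒮.inf_iSup_not_subset_le hAinv hreg hne)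
    · exact biSup_mono fun v hv => hnot hu hv
    · exact biSup_mono fun v hv huv =>
        Finset.ne_of_mem_erase hv (hJanti u hu v (Finset.mem_of_mem_erase hv) huv).symm
  have htop : (⨆ v ∈ I \ J, 𝒮.S v) ⊔ ⨆ u ∈ J, 𝒮.S u = 𝒮.S Finset.univ := by
    rw [← h𝒮.iSup_eq]
    exact iSup_union.symm.trans
      (congrArg (fun X : Set (Finset V) => ⨆ v ∈ X, 𝒮.S v) (Set.sdiff_union_of_subset hJI))
  rw [← htop, subfieldDeg_eq_relfinrank le_sup_left,
    relfinrank_sup_biSup_eq_prod J (fun u hu => 𝒮.galois u (hJ2 u hu)) hminus hinf]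
  exact Finset.prod_congr rfl fun u _ => (subfieldDeg_eq_relfinrank (𝒮.Sminus_le u)).symm
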